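/- arXiv:1008.2646 — 4 statements merged into one kernel-verified Lean document; each statement's English description precedes it below -/
import Mathlib

section
/- Let e₀, …, e_k ∈ 𝓞_K^{n+1} satisfy B(e_i, e_i) > 0 for all i and, for all i ≠ j, B(e_i, e_j)² ≥ B(e_i, e_i)·B(e_j, e_j) with e_i not a K-scalar multiple of e_j (so the hyperbolic hyperplanes they define are pairwise disjoint). Then there exists a finite-index subgroup Γ' of O_F(𝓞_K) such that for every h ∈ Γ', either h·e₀ is a K-scalar multiple of e₀, or for every i ∈ {0, …, k} one has B(h·e₀, e_i)² ≥ B(h·e₀, h·e₀)·B(e_i, e_i) and h·e₀ is not a K-scalar multiple of e_i (i.e. h maps the hyperplane defined by e₀ either to itself or to a hyperplane disjoint from all the given ones). -/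
open scoped Matrix

noncomputable section

/-- The bilinear form `B(u,v) = uᵀ F v` associated to a matrix `F`. -/
def bilinForm {m : ℕ} {R : Type*} [CommRing R] (F : Matrix (Fin m) (Fin m) R)
    (u v : Fin m → R) : R :=
  dotProduct u (F.mulVec v)

/-- The orthogonal group of the bilinear form with matrix `F`, as a subgroup of `GL`. -/
def orthogonalSubgroup {m : ℕ} {R : Type*} [CommRing R] (F : Matrix (Fin m) (Fin m) R) :
    Subgroup (GL (Fin m) R) where
  carrier := {h | ((h : Matrix (Fin m) (Fin m) R))ᵀ * F * (h : Matrix (Fin m) (Fin m) R) = F}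
  one_mem' := by simp
  mul_mem' := by
    intro a b ha hb
    simp only [Set.mem_setOf_eq, Units.val_mul, Matrix.transpose_mul] at *
    calc (b : Matrix (Fin m) (Fin m) R)ᵀ * (a : Matrix (Fin m) (Fin m) R)ᵀ * F *
          ((a : Matrix (Fin m) (Fin m) R) * (b : Matrix (Fin m) (Fin m) R))
        = (b : Matrix (Fin m) (Fin m) R)ᵀ *
            ((a : Matrix (Fin m) (Fin m) R)ᵀ * F * (a : Matrix (Fin m) (Fin m) R)) *
            (b : Matrix (Fin m) (Fin m) R) := by
          simp only [Matrix.mul_assoc]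
      _ = F := by rw [ha]; exact hb
  inv_mem' := by
    intro a ha
    simp only [Set.mem_setOf_eq] at *
    have h1 : (a : Matrix (Fin m) (Fin m) R) *
        ((a⁻¹ : GL (Fin m) R) : Matrix (Fin m) (Fin m) R) = 1 := by
      rw [← Units.val_mul, mul_inv_cancel, Units.val_one]
    calc ((a⁻¹ : GL (Fin m) R) : Matrix (Fin m) (Fin m) R)ᵀ * F *
          ((a⁻¹ : GL (Fin m) R) : Matrix (Fin m) (Fin m) R)
        = ((a⁻¹ : GL (Fin m) R) : Matrix (Fin m) (Fin m) R)ᵀ *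
            ((a : Matrix (Fin m) (Fin m) R)ᵀ * F * (a : Matrix (Fin m) (Fin m) R)) *
            ((a⁻¹ : GL (Fin m) R) : Matrix (Fin m) (Fin m) R) := by rw [ha]
      _ = ((a : Matrix (Fin m) (Fin m) R) *
            ((a⁻¹ : GL (Fin m) R) : Matrix (Fin m) (Fin m) R))ᵀ * F *
            ((a : Matrix (Fin m) (Fin m) R) *
              ((a⁻¹ : GL (Fin m) R) : Matrix (Fin m) (Fin m) R)) := by
          simp only [Matrix.transpose_mul, Matrix.mul_assoc]
      _ = F := by rw [h1]; simp

/-- The real embedding of `𝓞 K` induced by a real embedding `σ` of `K`. -/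
def embOK {K : Type*} [Field K] [NumberField K] (σ : K →+* ℝ) :
    NumberField.RingOfIntegers K →+* ℝ :=
  σ.comp (algebraMap (NumberField.RingOfIntegers K) K)

/-- `u` is a `K`-scalar multiple of `v` (both viewed as vectors in `K^m`). -/
def IsKScalarMultiple {K : Type*} [Field K] [NumberField K] {m : ℕ}
    (u v : Fin m → NumberField.RingOfIntegers K) : Prop :=
  ∃ c : K, (fun t => algebraMap (NumberField.RingOfIntegers K) K (u t)) =
    c • (fun t => algebraMap (NumberField.RingOfIntegers K) K (v t))

lemma mv_bilin_map {m : ℕ} {R S : Type*} [CommRing R] [CommRing S] (f : R →+* S)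
    (F : Matrix (Fin m) (Fin m) R) (u v : Fin m → R) :
    f (bilinForm F u v) = bilinForm (F.map f) (f ∘ u) (f ∘ v) := by
  simp only [bilinForm, dotProduct, Matrix.mulVec, map_sum, map_mul, Matrix.map_apply,
    Function.comp]

lemma mv_cauchy {m : ℕ} (M : Matrix (Fin m) (Fin m) ℝ) (hM : M.PosDef) (u v : Fin m → ℝ) :
    (bilinForm M u v) ^ 2 ≤ bilinForm M u u * bilinForm M v v := by
  have hnn : ∀ x, 0 ≤ (Matrix.toLinearMap₂' ℝ M : LinearMap.BilinForm ℝ (Fin m → ℝ)) x x := by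
    intro x
    rw [Matrix.toLinearMap₂'_apply']
    simpa using hM.posSemidef.dotProduct_mulVec_nonneg x
  have h := LinearMap.BilinForm.apply_mul_apply_le_of_forall_zero_le _ hnn u v
  simp only [Matrix.toLinearMap₂'_apply'] at h
  have hs : v ⬝ᵥ M *ᵥ u = u ⬝ᵥ M *ᵥ v := by
    have hT : Mᵀ = M := by simpa [Matrix.conjTranspose_eq_transpose_of_trivial] using hM.1.eq
    rw [Matrix.dotProduct_mulVec, ← Matrix.mulVec_transpose, hT, dotProduct_comm]
  rw [hs] at h
  unfold bilinForm
  rw [sq]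
  exact h

lemma mv_small {K : Type*} [Field K] [NumberField K]
    (d : ℕ) (σ : Fin d → (K →+* ℝ))
    (htotreal : ∀ φ : K →+* ℂ, ∃ j : Fin d, φ = Complex.ofRealHom.comp (σ j))
    (N : ℕ) (x : NumberField.RingOfIntegers K)
    (hdvd : (N : NumberField.RingOfIntegers K) ∣ x)
    (hx : ∀ j, |embOK (σ j) x| < N) : x = 0 := by
  obtain ⟨y, rfl⟩ := hdvd
  have hy : ∀ j, |embOK (σ j) y| < 1 := by
    intro j
    have h := hx j
    rw [map_mul, map_natCast, abs_mul, Nat.abs_cast] at h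
    have hN : (0 : ℝ) ≤ N := Nat.cast_nonneg N
    by_contra hc
    push Not at hc
    nlinarith
  by_cases hy0 : y = 0
  · simp [hy0]
  exfalso
  have hn : ∀ φ : K →+* ℂ, ‖φ (y : K)‖ < 1 := by
    intro φ
    obtain ⟨j, rfl⟩ := htotreal φ
    have := hy j
    simpa [embOK] using this
  obtain ⟨n, hn0, hpow⟩ := NumberField.Embeddings.pow_eq_one_of_norm_le_one K ℂ
    (x := (y : K)) (by simpa using hy0) y.2 (fun φ => (hn φ).le)
  obtain ⟨φ⟩ : Nonempty (K →+* ℂ) := inferInstance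
  have h1 : ‖φ (y : K)‖ ^ n = 1 := by
    rw [← norm_pow, ← map_pow, hpow]; simp
  exact absurd h1 (pow_lt_one₀ (norm_nonneg _) (hn φ) hn0.ne').ne

lemma mv_bound {α : Type*} [Finite α] (f : α → ℝ) : ∃ N : ℕ, ∀ a, f a < N := by
  obtain ⟨B, hB⟩ := (Set.finite_range f).bddAbove
  obtain ⟨N, hN⟩ := exists_nat_gt B
  exact ⟨N, fun a => (hB ⟨a, rfl⟩).trans_lt hN⟩

/-- The principal congruence subgroup of level `N`. -/
def mvCong {K : Type*} [Field K] [NumberField K] {m : ℕ}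
    (F : Matrix (Fin m) (Fin m) (NumberField.RingOfIntegers K)) (N : ℕ) :
    Subgroup (orthogonalSubgroup F) :=
  ((Matrix.GeneralLinearGroup.map (n := Fin m)
    (Ideal.Quotient.mk (Ideal.span {(N : NumberField.RingOfIntegers K)}))).comp
      (orthogonalSubgroup F).subtype).ker

lemma mvCong_index {K : Type*} [Field K] [NumberField K] {m : ℕ}
    (F : Matrix (Fin m) (Fin m) (NumberField.RingOfIntegers K)) (N : ℕ) (hN : N ≠ 0) :
    (mvCong F N).index ≠ 0 := by
  have : Finite (NumberField.RingOfIntegers K ⧸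
      Ideal.span {(N : NumberField.RingOfIntegers K)}) := by
    refine Ideal.finiteQuotientOfFreeOfNeBot _ (fun h => ?_)
    rw [Ideal.span_singleton_eq_bot] at h
    exact hN (by exact_mod_cast h)
  have : Finite (GL (Fin m) (NumberField.RingOfIntegers K ⧸
      Ideal.span {(N : NumberField.RingOfIntegers K)})) := by
    have : Finite (Matrix (Fin m) (Fin m) (NumberField.RingOfIntegers K ⧸
      Ideal.span {(N : NumberField.RingOfIntegers K)})) := by
      unfold Matrix; infer_instance
    infer_instance
  exact (Subgroup.finiteIndex_ker _).index_ne_zero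

lemma mvCong_mem {K : Type*} [Field K] [NumberField K] {m : ℕ}
    (F : Matrix (Fin m) (Fin m) (NumberField.RingOfIntegers K)) (N : ℕ)
    (h : orthogonalSubgroup F) (hh : h ∈ mvCong F N)
    (v : Fin m → NumberField.RingOfIntegers K) (t : Fin m) :
    (N : NumberField.RingOfIntegers K) ∣
      ((h : GL (Fin m) (NumberField.RingOfIntegers K)) :
        Matrix (Fin m) (Fin m) (NumberField.RingOfIntegers K)).mulVec v t - v t := by
  have hent : ∀ i j, Ideal.Quotient.mk (Ideal.span {(N : NumberField.RingOfIntegers K)})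
      (((h : GL (Fin m) (NumberField.RingOfIntegers K)) :
        Matrix (Fin m) (Fin m) (NumberField.RingOfIntegers K)) i j) =
      (1 : Matrix (Fin m) (Fin m) (NumberField.RingOfIntegers K ⧸
      Ideal.span {(N : NumberField.RingOfIntegers K)})) i j := by
    intro i j
    have h1 := MonoidHom.mem_ker.mp hh
    have h2 := congrArg (fun g : GL (Fin m) (NumberField.RingOfIntegers K ⧸
      Ideal.span {(N : NumberField.RingOfIntegers K)}) => g.val i j) h1
    exact h2
  rw [← Ideal.mem_span_singleton, ← Ideal.Quotient.eq]
  simp only [Matrix.mulVec, dotProduct, map_sum, map_mul, hent]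
  simp [Matrix.one_apply]

lemma mv_invariant {m : ℕ} {R : Type*} [CommRing R] (F : Matrix (Fin m) (Fin m) R)
    (h : orthogonalSubgroup F) (u v : Fin m → R) :
    bilinForm F (((h : GL (Fin m) R) : Matrix (Fin m) (Fin m) R).mulVec u)
      (((h : GL (Fin m) R) : Matrix (Fin m) (Fin m) R).mulVec v) = bilinForm F u v := by
  have hh : ((h : GL (Fin m) R) : Matrix (Fin m) (Fin m) R)ᵀ * F *
    ((h : GL (Fin m) R) : Matrix (Fin m) (Fin m) R) = F := h.2
  unfold bilinForm
  conv_rhs => rw [← hh]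
  rw [← Matrix.mulVec_mulVec, ← Matrix.mulVec_mulVec, Matrix.dotProduct_mulVec u,
    Matrix.vecMul_transpose]

lemma mv_bilin_dvd {m : ℕ} {R : Type*} [CommRing R] (F : Matrix (Fin m) (Fin m) R) (N : R)
    (u v w : Fin m → R) (hd : ∀ t, N ∣ u t - v t) :
    N ∣ bilinForm F u w - bilinForm F v w := by
  unfold bilinForm
  rw [← sub_dotProduct]
  exact Finset.dvd_sum fun t _ => Dvd.dvd.mul_right (hd t) _

lemma mv_core (K : Type*) [Field K] [NumberField K]
    (d : ℕ) (σ : Fin d → (K →+* ℝ))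
    (htotreal : ∀ φ : K →+* ℂ, ∃ j : Fin d, φ = Complex.ofRealHom.comp (σ j))
    (j₁ : Fin d) (m : ℕ)
    (F : Matrix (Fin m) (Fin m) (NumberField.RingOfIntegers K))
    (hFpos : ∀ j : Fin d, j ≠ j₁ → (F.map (embOK (σ j))).PosDef) (N : ℕ)
    (u v w : Fin m → NumberField.RingOfIntegers K)
    (hd : ∀ t, (N : NumberField.RingOfIntegers K) ∣ u t - v t)
    (huv : bilinForm F u u = bilinForm F v v)
    (hN : ∀ j, |embOK (σ j) (bilinForm F v w)| +
      |embOK (σ j) (bilinForm F v v * bilinForm F w w)| + 1 < N)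
    (hle : embOK (σ j₁) (bilinForm F u w) ^ 2 ≤
      embOK (σ j₁) (bilinForm F v v) * embOK (σ j₁) (bilinForm F w w)) :
    bilinForm F u w = bilinForm F v w := by
  rw [← sub_eq_zero]
  refine mv_small d σ htotreal N _ (mv_bilin_dvd F _ u v w hd) fun j => ?_
  have h2 : embOK (σ j) (bilinForm F u w) ^ 2 ≤
      embOK (σ j) (bilinForm F v v * bilinForm F w w) := by
    rw [map_mul]
    by_cases hj : j = j₁
    · rw [hj]; exact hle
    · rw [← huv]
      simp only [mv_bilin_map]
      exact mv_cauchy _ (hFpos j hj) _ _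
  have h3 := hN j
  rw [map_sub]
  refine (abs_sub _ _).trans_lt ?_
  have h4 := le_abs_self (embOK (σ j) (bilinForm F v v * bilinForm F w w))
  have h5 := sq_abs (embOK (σ j) (bilinForm F u w))
  nlinarith [sq_nonneg (|embOK (σ j) (bilinForm F u w)| - 1),
    abs_nonneg (embOK (σ j) (bilinForm F u w))]

/-- **Generalised Margulis–Vinberg lemma** (non-strict form).
Let `K` be a totally real number field with real embeddings `σ 0, …, σ (d-1)` (the family
`σ` enumerates all of them without repetition and every complex embedding of `K` factors
through one of them), with distinguished embedding `σ j₁`; positivity of elements of `K`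
refers to images under `σ j₁`.  Let `F` be a symmetric matrix over `𝓞 K` of size `n+1`,
`n ≥ 2`, such that `σ j (F)` is positive definite for all `j ≠ j₁`.  Suppose
`e 0, …, e k ∈ 𝓞 K^{n+1}` satisfy `B(eᵢ,eᵢ) > 0` and, for `i ≠ j`,
`B(eᵢ,eⱼ)² ≥ B(eᵢ,eᵢ)·B(eⱼ,eⱼ)` with `eᵢ` not a `K`-scalar multiple of `eⱼ` (so the
hyperbolic hyperplanes they define are pairwise disjoint).  Then there is a finite-index
subgroup `Γ'` of `O_F(𝓞 K)` such that every `h ∈ Γ'` maps the hyperplane of `e 0` either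
to itself or to a hyperplane disjoint from all the given ones. -/
theorem generalized_margulis_vinberg
    (K : Type*) [Field K] [NumberField K]
    (d : ℕ) (σ : Fin d → (K →+* ℝ))
    (hσinj : Function.Injective σ)
    (hσall : ∀ τ : K →+* ℝ, ∃ j : Fin d, τ = σ j)
    (htotreal : ∀ φ : K →+* ℂ, ∃ j : Fin d, φ = Complex.ofRealHom.comp (σ j))
    (j₁ : Fin d)
    (n : ℕ) (hn : 2 ≤ n)
    (F : Matrix (Fin (n + 1)) (Fin (n + 1)) (NumberField.RingOfIntegers K))
    (hFsymm : F.IsSymm)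
    (hFpos : ∀ j : Fin d, j ≠ j₁ → (F.map (embOK (σ j))).PosDef)
    (k : ℕ) (e : Fin (k + 1) → (Fin (n + 1) → NumberField.RingOfIntegers K))
    (hpos : ∀ i, 0 < embOK (σ j₁) (bilinForm F (e i) (e i)))
    (hdisj : ∀ i j, i ≠ j →
      (embOK (σ j₁) (bilinForm F (e i) (e j))) ^ 2 ≥
        embOK (σ j₁) (bilinForm F (e i) (e i)) *
          embOK (σ j₁) (bilinForm F (e j) (e j)))
    (hprop : ∀ i j, i ≠ j → ¬ IsKScalarMultiple (e i) (e j)) :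
    ∃ Γ' : Subgroup (orthogonalSubgroup F),
      Γ'.index ≠ 0 ∧
      ∀ h : orthogonalSubgroup F, h ∈ Γ' →
        IsKScalarMultiple
          (((h : GL (Fin (n + 1)) (NumberField.RingOfIntegers K)) :
              Matrix (Fin (n + 1)) (Fin (n + 1)) (NumberField.RingOfIntegers K)).mulVec
            (e 0)) (e 0) ∨
        ∀ i : Fin (k + 1),
          (embOK (σ j₁) (bilinForm F
              (((h : GL (Fin (n + 1)) (NumberField.RingOfIntegers K)) :
                  Matrix (Fin (n + 1)) (Fin (n + 1)) (NumberField.RingOfIntegers K)).mulVec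
                (e 0)) (e i))) ^ 2 ≥
            embOK (σ j₁) (bilinForm F
              (((h : GL (Fin (n + 1)) (NumberField.RingOfIntegers K)) :
                  Matrix (Fin (n + 1)) (Fin (n + 1)) (NumberField.RingOfIntegers K)).mulVec
                (e 0))
              (((h : GL (Fin (n + 1)) (NumberField.RingOfIntegers K)) :
                  Matrix (Fin (n + 1)) (Fin (n + 1)) (NumberField.RingOfIntegers K)).mulVec
                (e 0))) *
              embOK (σ j₁) (bilinForm F (e i) (e i)) ∧
          ¬ IsKScalarMultiple
            (((h : GL (Fin (n + 1)) (NumberField.RingOfIntegers K)) :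
                Matrix (Fin (n + 1)) (Fin (n + 1)) (NumberField.RingOfIntegers K)).mulVec
              (e 0)) (e i) := by
  obtain ⟨N₁, hN₁⟩ := mv_bound (fun p : Fin (k + 1) × Fin d =>
    |embOK (σ p.2) (bilinForm F (e 0) (e p.1))| +
      |embOK (σ p.2) (bilinForm F (e 0) (e 0) * bilinForm F (e p.1) (e p.1))| + 1)
  obtain ⟨N₂, hN₂⟩ := mv_bound (fun p : (Fin (k + 1) × Fin d) × Fin (n + 1) =>
    |embOK (σ p.1.2) (bilinForm F (e p.1.1) (e p.1.1) * e 0 p.2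
      - bilinForm F (e 0) (e p.1.1) * e p.1.1 p.2)|)
  set N : ℕ := max (max N₁ N₂) 1 with hNdef
  have hA : ∀ i j, |embOK (σ j) (bilinForm F (e 0) (e i))| +
      |embOK (σ j) (bilinForm F (e 0) (e 0) * bilinForm F (e i) (e i))| + 1 < (N : ℝ) := by
    intro i j
    refine (hN₁ (i, j)).trans_le ?_
    exact_mod_cast (le_max_left _ _).trans (le_max_left _ _)
  have hB : ∀ i j t, |embOK (σ j) (bilinForm F (e i) (e i) * e 0 t
      - bilinForm F (e 0) (e i) * e i t)| < (N : ℝ) := by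
    intro i j t
    refine (hN₂ ((i, j), t)).trans_le ?_
    exact_mod_cast (le_max_right _ _).trans (le_max_left _ _)
  refine ⟨mvCong F N, mvCong_index F N (by have := le_max_right (max N₁ N₂) 1; omega), ?_⟩
  intro h hh
  have hcong := mvCong_mem F N h hh (e 0)
  have hinv := mv_invariant F h (e 0) (e 0)
  generalize hu : ((h : GL (Fin (n + 1)) (NumberField.RingOfIntegers K)) :
    Matrix (Fin (n + 1)) (Fin (n + 1)) (NumberField.RingOfIntegers K)).mulVec (e 0) = u at *
  by_cases h0 : IsKScalarMultiple u (e 0)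
  · exact Or.inl h0
  refine Or.inr fun i => ?_
  have hcore := mv_core K d σ htotreal j₁ (n + 1) F hFpos N u (e 0) (e i) hcong hinv (hA i)
  constructor
  · by_contra hlt
    push Not at hlt
    rw [hinv] at hlt
    rw [hcore hlt.le] at hlt
    by_cases hi : i = 0
    · subst hi
      nlinarith
    · exact absurd (hdisj 0 i (Ne.symm hi)) (not_le.mpr hlt)
  · intro hm
    by_cases hi : i = 0
    · exact h0 (hi ▸ hm)
    obtain ⟨c, hc⟩ := hm
    have hct : ∀ t, (algebraMap (NumberField.RingOfIntegers K) K (u t)) =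
        c * algebraMap (NumberField.RingOfIntegers K) K (e i t) := fun t => congrFun hc t
    set ι := algebraMap (NumberField.RingOfIntegers K) K with hι
    have hιinj : Function.Injective ι := NumberField.RingOfIntegers.coe_injective
    -- `B(u, w) = c B(e i, w)` and `B(u,u) = c² B(e i, e i)`
    have huc : ι ∘ u = c • (ι ∘ e i) := hc
    have hau : ι (bilinForm F u (e i)) = c * ι (bilinForm F (e i) (e i)) := by
      rw [mv_bilin_map, mv_bilin_map, huc]
      simp [bilinForm, smul_dotProduct]
    have huu : ι (bilinForm F u u) = c * (c * ι (bilinForm F (e i) (e i))) := by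
      rw [mv_bilin_map, mv_bilin_map, huc]
      simp [bilinForm, smul_dotProduct, Matrix.mulVec_smul, dotProduct_smul]
    have hsq : bilinForm F u (e i) ^ 2 = bilinForm F (e 0) (e 0) * bilinForm F (e i) (e i) := by
      apply hιinj
      rw [← hinv, map_pow, map_mul, hau, huu]
      ring
    have hab := hcore (by rw [← map_pow, ← map_mul, hsq])
    -- hence `B(e i, e i) u = B(e 0, e i) e i`
    have hprop' : ∀ t, bilinForm F (e i) (e i) * u t = bilinForm F (e 0) (e i) * e i t := by
      intro t
      apply hιinj
      rw [map_mul, map_mul, ← hab, hau, hct t]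
      ring
    have hz : ∀ t, bilinForm F (e i) (e i) * e 0 t - bilinForm F (e 0) (e i) * e i t = 0 := by
      intro t
      refine mv_small d σ htotreal N _ ?_ (fun j => hB i j t)
      rw [← hprop' t, ← mul_sub]
      exact Dvd.dvd.mul_left ((dvd_sub_comm).mp (hcong t)) _
    have hne : ι (bilinForm F (e i) (e i)) ≠ 0 := by
      intro h1
      have h2 := hpos i
      simp only [embOK, RingHom.comp_apply] at h2
      rw [← hι, h1, map_zero] at h2
      exact lt_irrefl _ h2
    refine hprop 0 i (Ne.symm hi) ⟨ι (bilinForm F (e 0) (e i)) / ι (bilinForm F (e i) (e i)), ?_⟩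
    funext t
    have h3 := congrArg ι (sub_eq_zero.mp (hz t))
    rw [map_mul, map_mul] at h3
    simp only [Pi.smul_apply, smul_eq_mul]
    field_simp
    linear_combination h3

end
end

section
/- Let e₀, e₁ ∈ 𝓞_K^{n+1} satisfy B(e₀,e₀) > 0, B(e₁,e₁) > 0 and B(e₀,e₁)² ≥ B(e₀,e₀)·B(e₁,e₁) (in particular B(e₀,e₁) ≠ 0). Let S ⊆ {2,…,d} be the set of indices j for which σⱼ(B(e₀,e₀))·σⱼ(B(e₁,e₁)) > σⱼ(B(e₀,e₁))², and let C ≥ 2 be an integer satisfying C ≥ ∏_{j∈S} σⱼ(B(e₀,e₀))·σⱼ(B(e₁,e₁)) / σⱼ(B(e₀,e₁))². Then every h ∈ O_F(𝓞_K) that is congruent to the identity modulo 2C·B(e₀,e₁) satisfies |σ₁(B(h·e₀, e₁))| ≥ |σ₁(B(e₀,e₁))|, and consequently B(h·e₀, e₁)² ≥ B(h·e₀, h·e₀)·B(e₁,e₁). -/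
open scoped Matrix

noncomputable section

lemma aux_cs {m : ℕ} (M : Matrix (Fin m) (Fin m) ℝ) (hs : M.IsSymm) (hM : M.PosDef)
    (x y : Fin m → ℝ) : (bilinForm M x y) ^ 2 ≤ bilinForm M x x * bilinForm M y y := by
  have hsym : bilinForm M y x = bilinForm M x y := by
    unfold bilinForm
    rw [Matrix.dotProduct_mulVec, ← Matrix.mulVec_transpose, hs.eq, dotProduct_comm]
  have key : ∀ t : ℝ, 0 ≤ bilinForm M y y * (t * t) + (2 * bilinForm M x y) * t
      + bilinForm M x x := by
    intro t
    have h1 := hM.posSemidef.dotProduct_mulVec_nonneg (x + t • y)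
    have h2 : bilinForm M (x + t • y) (x + t • y) = bilinForm M y y * (t * t)
        + (2 * bilinForm M x y) * t + bilinForm M x x := by
      have e : bilinForm M (x + t • y) (x + t • y) = bilinForm M x x + t * bilinForm M x y
          + t * bilinForm M y x + t * t * bilinForm M y y := by
        simp only [bilinForm, Matrix.mulVec_add, Matrix.mulVec_smul, add_dotProduct,
          dotProduct_add, smul_dotProduct, dotProduct_smul, smul_eq_mul]
        ring
      rw [e, hsym]; ring
    rw [← h2]
    simpa [bilinForm] using h1
  have := discrim_le_zero key
  unfold discrim at this
  nlinarith

lemma aux_map {m : ℕ} {R : Type*} [CommRing R] (f : R →+* ℝ) (F : Matrix (Fin m) (Fin m) R)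
    (u v : Fin m → R) : f (bilinForm F u v) = bilinForm (F.map f) (f ∘ u) (f ∘ v) := by
  simp [bilinForm, dotProduct, Matrix.mulVec, map_sum]

lemma aux_orth {m : ℕ} {R : Type*} [CommRing R] (F h : Matrix (Fin m) (Fin m) R)
    (hh : hᵀ * F * h = F) (u v : Fin m → R) :
    bilinForm F (h.mulVec u) (h.mulVec v) = bilinForm F u v := by
  unfold bilinForm
  conv_rhs => rw [← hh]
  rw [← Matrix.mulVec_mulVec, ← Matrix.mulVec_mulVec, Matrix.dotProduct_mulVec u hᵀ,
    Matrix.vecMul_transpose]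

lemma aux_dvd {m : ℕ} {R : Type*} [CommRing R] (F h : Matrix (Fin m) (Fin m) R) (β : R)
    (hh : ∀ s t, (h - 1) s t ∈ Ideal.span {β}) (u v : Fin m → R) :
    ∃ a : R, bilinForm F (h.mulVec u) v = bilinForm F u v + β * a := by
  have h1 : bilinForm F (h.mulVec u) v - bilinForm F u v = bilinForm F ((h - 1).mulVec u) v := by
    simp [bilinForm, Matrix.sub_mulVec, sub_dotProduct]
  have h2 : bilinForm F ((h - 1).mulVec u) v ∈ Ideal.span {β} := by
    unfold bilinForm dotProduct
    refine Ideal.sum_mem _ fun i _ => Ideal.mul_mem_right _ _ ?_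
    unfold Matrix.mulVec dotProduct
    exact Ideal.sum_mem _ fun j _ => Ideal.mul_mem_right _ _ (hh i j)
  obtain ⟨a, ha⟩ := Ideal.mem_span_singleton'.1 h2
  exact ⟨a, by rw [mul_comm β a, ha, ← h1]; ring⟩

lemma aux_norm {K : Type*} [Field K] [NumberField K]
    (d : ℕ) (σ : Fin d → (K →+* ℝ)) (hσinj : Function.Injective σ)
    (htotreal : ∀ φ : K →+* ℂ, ∃ j : Fin d, φ = Complex.ofRealHom.comp (σ j))
    (a : NumberField.RingOfIntegers K) (ha : a ≠ 0) :
    1 ≤ ∏ j, |embOK (σ j) a| := by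
  have hb : Function.Bijective
      (fun j => RingHom.equivRatAlgHom (R := K) (S := ℂ) (Complex.ofRealHom.comp (σ j))) := by
    refine (RingHom.equivRatAlgHom (R := K) (S := ℂ)).bijective.comp ⟨?_, ?_⟩
    · intro i j hij
      apply hσinj
      ext x
      have := RingHom.congr_fun hij x
      simpa using this
    · intro φ
      obtain ⟨j, hj⟩ := htotreal φ
      exact ⟨j, hj.symm⟩
  have h1 := Algebra.norm_eq_prod_embeddings ℚ ℂ (a : K)
  rw [← hb.prod_comp (fun φ : K →ₐ[ℚ] ℂ => φ (a : K))] at h1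
  have h2 : ((Algebra.norm ℤ a : ℤ) : ℚ) = Algebra.norm ℚ (a : K) :=
    Algebra.coe_norm_int a
  rw [← h2] at h1
  have h3 : ((Algebra.norm ℤ a : ℤ) : ℝ) = ∏ j, embOK (σ j) a := by
    apply Complex.ofReal_injective
    push_cast
    simpa [embOK] using h1
  rw [← Finset.abs_prod, ← h3]
  have : Algebra.norm ℤ a ≠ 0 := Algebra.norm_ne_zero_iff.2 ha
  exact_mod_cast Int.one_le_abs this

lemma aux_real (c x r : ℝ) (hc : 2 ≤ c) (hr : 1 ≤ r) (hx : (1 + 2 * c * x) ^ 2 ≤ r) :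
    |x| ≤ r := by
  have h3 : r ≤ r ^ 2 := by nlinarith
  have h2 := abs_le.1 (abs_le_of_sq_le_sq (hx.trans h3) (by linarith))
  rw [abs_le]
  constructor <;> nlinarith [h2.1, h2.2]

/-- Congruence subgroup estimate from the proof of the generalised Margulis–Vinberg lemma.
Let `K` be a totally real number field with real embeddings `σ 0, …, σ (d-1)` (the family
`σ` enumerates all of them without repetition and every complex embedding of `K` factors
through one of them), with distinguished embedding `σ j₁`; positivity of elements of `K`
refers to images under `σ j₁`.  Let `F` be a symmetric matrix over `𝓞 K` of size `n+1`,
`n ≥ 2`, with `σ j (F)` positive definite for all `j ≠ j₁`.  Suppose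
`e₀, e₁ ∈ 𝓞 K^{n+1}` satisfy `B(e₀,e₀) > 0`, `B(e₁,e₁) > 0` and
`B(e₀,e₁)² ≥ B(e₀,e₀)·B(e₁,e₁)` (in particular `B(e₀,e₁) ≠ 0`).  Let `S` be the set of
indices `j ≠ j₁` with `σⱼ(B(e₀,e₀))·σⱼ(B(e₁,e₁)) > σⱼ(B(e₀,e₁))²` and let `C ≥ 2` be an
integer at least `∏_{j ∈ S} σⱼ(B(e₀,e₀))·σⱼ(B(e₁,e₁)) / σⱼ(B(e₀,e₁))²`.  Then every
`h ∈ O_F(𝓞 K)` congruent to the identity modulo `2·C·B(e₀,e₁)` satisfies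
`|σ₁(B(h·e₀,e₁))| ≥ |σ₁(B(e₀,e₁))|`, and consequently
`B(h·e₀,e₁)² ≥ B(h·e₀,h·e₀)·B(e₁,e₁)`. -/
theorem congruence_elements_keep_hyperplanes_apart
    (K : Type*) [Field K] [NumberField K]
    (d : ℕ) (σ : Fin d → (K →+* ℝ))
    (hσinj : Function.Injective σ)
    (hσall : ∀ τ : K →+* ℝ, ∃ j : Fin d, τ = σ j)
    (htotreal : ∀ φ : K →+* ℂ, ∃ j : Fin d, φ = Complex.ofRealHom.comp (σ j))
    (j₁ : Fin d)
    (n : ℕ) (hn : 2 ≤ n)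
    (F : Matrix (Fin (n + 1)) (Fin (n + 1)) (NumberField.RingOfIntegers K))
    (hFsymm : F.IsSymm)
    (hFpos : ∀ j : Fin d, j ≠ j₁ → (F.map (embOK (σ j))).PosDef)
    (e₀ e₁ : Fin (n + 1) → NumberField.RingOfIntegers K)
    (hpos₀ : 0 < embOK (σ j₁) (bilinForm F e₀ e₀))
    (hpos₁ : 0 < embOK (σ j₁) (bilinForm F e₁ e₁))
    (hsep : (embOK (σ j₁) (bilinForm F e₀ e₁)) ^ 2 ≥
      embOK (σ j₁) (bilinForm F e₀ e₀) * embOK (σ j₁) (bilinForm F e₁ e₁))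
    (hne : bilinForm F e₀ e₁ ≠ 0)
    (S : Finset (Fin d))
    (hS : ∀ j : Fin d, j ∈ S ↔ j ≠ j₁ ∧
      embOK (σ j) (bilinForm F e₀ e₀) * embOK (σ j) (bilinForm F e₁ e₁) >
        (embOK (σ j) (bilinForm F e₀ e₁)) ^ 2)
    (C : ℕ) (hC2 : 2 ≤ C)
    (hC : (∏ j ∈ S,
        embOK (σ j) (bilinForm F e₀ e₀) * embOK (σ j) (bilinForm F e₁ e₁) /
          (embOK (σ j) (bilinForm F e₀ e₁)) ^ 2) ≤ (C : ℝ))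
    (h : GL (Fin (n + 1)) (NumberField.RingOfIntegers K))
    (hmem : h ∈ orthogonalSubgroup F)
    (hcong : ∀ s t : Fin (n + 1),
      ((h : Matrix (Fin (n + 1)) (Fin (n + 1)) (NumberField.RingOfIntegers K)) - 1) s t ∈
        Ideal.span {2 * (C : NumberField.RingOfIntegers K) * bilinForm F e₀ e₁}) :
    |embOK (σ j₁) (bilinForm F
        ((h : Matrix (Fin (n + 1)) (Fin (n + 1)) (NumberField.RingOfIntegers K)).mulVec e₀)
        e₁)| ≥ |embOK (σ j₁) (bilinForm F e₀ e₁)| ∧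
    (embOK (σ j₁) (bilinForm F
        ((h : Matrix (Fin (n + 1)) (Fin (n + 1)) (NumberField.RingOfIntegers K)).mulVec e₀)
        e₁)) ^ 2 ≥
      embOK (σ j₁) (bilinForm F
        ((h : Matrix (Fin (n + 1)) (Fin (n + 1)) (NumberField.RingOfIntegers K)).mulVec e₀)
        ((h : Matrix (Fin (n + 1)) (Fin (n + 1)) (NumberField.RingOfIntegers K)).mulVec e₀)) *
      embOK (σ j₁) (bilinForm F e₁ e₁) := by
  have hCr : (2 : ℝ) ≤ C := by exact_mod_cast hC2
  have horth := aux_orth F _ hmem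
  have hb : ∀ j, embOK (σ j) (bilinForm F e₀ e₁) ≠ 0 := by
    intro j hj
    apply hne
    have h1 := (map_eq_zero (σ j)).1 hj
    exact NumberField.RingOfIntegers.coe_eq_zero_iff.1 h1
  have main : |embOK (σ j₁) (bilinForm F e₀ e₁)| ≤ |embOK (σ j₁) (bilinForm F
        ((h : Matrix (Fin (n + 1)) (Fin (n + 1)) (NumberField.RingOfIntegers K)).mulVec e₀)
        e₁)| := by
    by_contra! hlt
    obtain ⟨a, ha⟩ := aux_dvd F _ _ hcong e₀ e₁
    have hfac : ∀ j, embOK (σ j) (bilinForm F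
        ((h : Matrix (Fin (n + 1)) (Fin (n + 1)) (NumberField.RingOfIntegers K)).mulVec e₀)
        e₁) = embOK (σ j) (bilinForm F e₀ e₁) * (1 + 2 * C * embOK (σ j) a) := by
      intro j
      rw [ha]
      simp only [map_add, map_mul, map_natCast, map_ofNat]
      ring
    have ha0 : a ≠ 0 := by
      rintro rfl
      rw [hfac] at hlt
      simp at hlt
    have hN := aux_norm d σ hσinj htotreal a ha0
    have hlt1 : |1 + 2 * C * embOK (σ j₁) a| < 1 := by
      rw [hfac, abs_mul] at hlt
      have := abs_pos.2 (hb j₁)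
      by_contra! hc
      nlinarith
    have hα1 : C * |embOK (σ j₁) a| < 1 := by
      rw [abs_lt] at hlt1
      rw [← abs_of_pos (show (0 : ℝ) < C by linarith), ← abs_mul, abs_lt]
      constructor <;> linarith
    -- the bound at the other places
    have hr : ∀ j, j ≠ j₁ → (1 + 2 * C * embOK (σ j) a) ^ 2 ≤
        embOK (σ j) (bilinForm F e₀ e₀) * embOK (σ j) (bilinForm F e₁ e₁) /
          (embOK (σ j) (bilinForm F e₀ e₁)) ^ 2 := by
      intro j hj
      have hp : 0 < (embOK (σ j) (bilinForm F e₀ e₁)) ^ 2 := by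
        have := hb j
        positivity
      rw [le_div_iff₀ hp, mul_comm, ← mul_pow, ← hfac, ← horth e₀ e₀]
      simp only [aux_map]
      exact aux_cs _ (hFsymm.map _) (hFpos j hj) _ _
    have hout : ∀ j, j ≠ j₁ → j ∉ S → |embOK (σ j) a| ≤ 1 := by
      intro j hj hjS
      have h1 : (1 + 2 * C * embOK (σ j) a) ^ 2 ≤ 1 := by
        refine (hr j hj).trans ?_
        have hp : 0 < (embOK (σ j) (bilinForm F e₀ e₁)) ^ 2 := by
          have := hb j
          positivity
        rw [div_le_one hp]
        by_contra! hc
        exact hjS ((hS j).2 ⟨hj, hc⟩)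
      exact aux_real _ _ _ hCr le_rfl h1
    have hin : ∀ j ∈ S, |embOK (σ j) a| ≤
        embOK (σ j) (bilinForm F e₀ e₀) * embOK (σ j) (bilinForm F e₁ e₁) /
          (embOK (σ j) (bilinForm F e₀ e₁)) ^ 2 := by
      intro j hjS
      obtain ⟨hj, hgt⟩ := (hS j).1 hjS
      have h1 := hr j hj
      have hp : 0 < (embOK (σ j) (bilinForm F e₀ e₁)) ^ 2 := by
        have := hb j
        positivity
      have hr1 := (one_lt_div hp).2 hgt
      exact aux_real _ _ _ hCr hr1.le h1
    have hprod : ∏ j ∈ Finset.univ.erase j₁, |embOK (σ j) a| ≤ C := by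
      have hsub : S ⊆ Finset.univ.erase j₁ := by
        intro j hj
        exact Finset.mem_erase.2 ⟨((hS j).1 hj).1, Finset.mem_univ _⟩
      rw [← Finset.prod_sdiff hsub]
      have p1 : ∏ j ∈ Finset.univ.erase j₁ \ S, |embOK (σ j) a| ≤ 1 := by
        refine Finset.prod_le_one (fun _ _ => abs_nonneg _) fun j hj => ?_
        obtain ⟨hj1, hj2⟩ := Finset.mem_sdiff.1 hj
        exact hout j (Finset.ne_of_mem_erase hj1) hj2
      have p2 := (Finset.prod_le_prod (fun j _ => abs_nonneg (embOK (σ j) a)) hin).trans hC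
      have p3 : 0 ≤ ∏ j ∈ S, |embOK (σ j) a| := Finset.prod_nonneg fun _ _ => abs_nonneg _
      exact (mul_le_of_le_one_left p3 p1).trans p2
    rw [← Finset.mul_prod_erase _ _ (Finset.mem_univ j₁)] at hN
    have := mul_le_mul_of_nonneg_left hprod (abs_nonneg (embOK (σ j₁) a))
    linarith
  refine ⟨main, ?_⟩
  rw [horth e₀ e₀]
  exact hsep.trans (sq_le_sq.2 main)

end
end

section
/- Fix n ≥ 2 and let F = diag(−√5, 1, …, 1) be the real diagonal (n+1)×(n+1) matrix of the quadratic form f = −√5·x₀² + x₁² + ⋯ + x_n². For each integer i ≥ 1, let A_i be the real (n+1)×(n+1) matrix with (A_i)₀₀ = (A_i)_{nn} = (i²+√5)/(i²−√5), (A_i)_{0n} = −2i/(i²−√5), (A_i)_{n0} = −2i√5/(i²−√5), (A_i)_{jj} = 1 for 1 ≤ j ≤ n−1, and all other entries equal to 0. Then A_iᵀ F A_i = F, i.e. A_i lies in the real orthogonal group of the form f. -/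
open scoped Matrix

/-- Fix `n ≥ 2` and let `F = diag(−√5, 1, …, 1)` be the matrix of the quadratic form
`f = −√5·x₀² + x₁² + ⋯ + x_n²` on `ℝ^{n+1}`.  For an integer `i ≥ 1`, the matrix `A`
with `A₀₀ = A_nn = (i²+√5)/(i²−√5)`, `A_{0n} = −2i/(i²−√5)`, `A_{n0} = −2i√5/(i²−√5)`,
`A_jj = 1` for `1 ≤ j ≤ n−1` and all other entries `0`, satisfies `Aᵀ F A = F`,
i.e. `A` lies in the real orthogonal group of the form `f`. -/
theorem matrix_preserves_form
    (n : ℕ) (hn : 2 ≤ n) (i : ℕ) (hi : 1 ≤ i)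
    (F : Matrix (Fin (n + 1)) (Fin (n + 1)) ℝ)
    (hF : F = Matrix.diagonal (fun j => if j = 0 then -Real.sqrt 5 else 1))
    (A : Matrix (Fin (n + 1)) (Fin (n + 1)) ℝ)
    (hA : A = fun s t =>
      if s = 0 ∧ t = 0 then ((i : ℝ) ^ 2 + Real.sqrt 5) / ((i : ℝ) ^ 2 - Real.sqrt 5)
      else if s = 0 ∧ t = Fin.last n then (-2 * (i : ℝ)) / ((i : ℝ) ^ 2 - Real.sqrt 5)
      else if s = Fin.last n ∧ t = 0 then
        (-2 * (i : ℝ) * Real.sqrt 5) / ((i : ℝ) ^ 2 - Real.sqrt 5)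
      else if s = Fin.last n ∧ t = Fin.last n then
        ((i : ℝ) ^ 2 + Real.sqrt 5) / ((i : ℝ) ^ 2 - Real.sqrt 5)
      else if s = t then 1 else 0) :
    Aᵀ * F * A = F := by
  obtain ⟨m, rfl⟩ : ∃ m, n = m + 1 := ⟨n - 1, by omega⟩
  have hr : Real.sqrt 5 ^ 2 = 5 := Real.sq_sqrt (by norm_num)
  have hd : (i : ℝ) ^ 2 - Real.sqrt 5 ≠ 0 := by
    intro h
    have h1 : (i : ℝ) ^ 2 = Real.sqrt 5 := by linarith
    have h2 : ((i : ℝ) ^ 2) ^ 2 = 5 := by rw [h1, hr]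
    have h3 : (i ^ 2) ^ 2 = 5 := by exact_mod_cast h2
    have h4 : i < 2 := by
      by_contra hc
      have : 2 ≤ i := by omega
      have : (2 ^ 2) ^ 2 ≤ (i ^ 2) ^ 2 := by gcongr
      omega
    interval_cases i
    omega
  generalize Real.sqrt 5 = r at *
  generalize (i : ℝ) = x at *
  have hmid0 : ∀ k : Fin m, k.castSucc.succ ≠ (0 : Fin (m + 1 + 1)) :=
    fun k => Fin.succ_ne_zero _
  have hmidl : ∀ k : Fin m, k.castSucc.succ ≠ Fin.last (m + 1) := by
    intro k h
    have := congrArg Fin.val h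
    have := k.2
    simp at *
    try omega
  have hl0 : Fin.last (m + 1) ≠ 0 := by
    intro h
    have := congrArg Fin.val h
    simp at this
  have cases3 : ∀ s : Fin (m + 1 + 1), s = 0 ∨ s = Fin.last (m + 1) ∨
      ∃ k : Fin m, s = k.castSucc.succ := by
    intro s
    refine Fin.cases (Or.inl rfl) (fun j => ?_) s
    refine Fin.lastCases (Or.inr (Or.inl rfl)) (fun k => ?_) j
    exact Or.inr (Or.inr ⟨k, rfl⟩)
  have hA' := fun s t => congrFun (congrFun hA s) t
  clear hA
  subst hF
  ext s t
  rw [Matrix.mul_apply]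
  simp only [Matrix.mul_diagonal, Matrix.transpose_apply, hA']
  rw [Fin.sum_univ_succ, Fin.sum_univ_castSucc, Fin.succ_last]
  rcases cases3 s with rfl | rfl | ⟨p, rfl⟩ <;> rcases cases3 t with rfl | rfl | ⟨q, rfl⟩ <;>
    simp only [hmid0, hmidl, hl0, (hmid0 _).symm, (hmidl _).symm, hl0.symm, Matrix.diagonal_apply,
      Fin.succ_inj, Fin.castSucc_inj, and_true, and_false, true_and, false_and, and_self, if_true, if_false,
      mul_one, mul_zero, zero_mul, zero_add, add_zero, Finset.sum_const_zero, Nat.succ_eq_add_one]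
  · field_simp
    ring
  · field_simp
    ring
  · field_simp
    ring
  · field_simp
    ring
  · simp [eq_comm]
end

section
/- Fix n ≥ 2 and let B(u,v) = −√5·u₀v₀ + u₁v₁ + ⋯ + u_n v_n be the real bilinear form of the quadratic form f = −√5·x₀² + x₁² + ⋯ + x_n². For an integer i ≥ 1, let e₀ = (0, 0, …, 0, i²−√5) and e₁ = (−2i, 0, …, 0, i²+√5) in ℝ^{n+1}. Then B(e₀, e₁) = i⁴ − 5, B(e₀, e₀) = B(e₁, e₁) = (i²−√5)² > 0, and B(e₀,e₁)² > B(e₀,e₀)·B(e₁,e₁), so the hyperplanes in hyperbolic n-space defined by e₀ and e₁ are disjoint and do not meet at infinity. -/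
open scoped Matrix

/-- Fix `n ≥ 2` and let `B(u,v) = −√5·u₀v₀ + u₁v₁ + ⋯ + u_n v_n` be the bilinear form
of `f = −√5·x₀² + x₁² + ⋯ + x_n²`.  For an integer `i ≥ 1`, the vectors
`e₀ = (0, …, 0, i²−√5)` and `e₁ = (−2i, 0, …, 0, i²+√5)` satisfy
`B(e₀,e₁) = i⁴−5`, `B(e₀,e₀) = B(e₁,e₁) = (i²−√5)² > 0` and
`B(e₀,e₁)² > B(e₀,e₀)·B(e₁,e₁)`, so the hyperplanes in hyperbolic `n`-space they define
are disjoint and do not meet at infinity. -/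
theorem hyperplanes_disjoint
    (n : ℕ) (hn : 2 ≤ n) (i : ℕ) (hi : 1 ≤ i)
    (F : Matrix (Fin (n + 1)) (Fin (n + 1)) ℝ)
    (hF : F = Matrix.diagonal (fun j => if j = 0 then -Real.sqrt 5 else 1))
    (B : (Fin (n + 1) → ℝ) → (Fin (n + 1) → ℝ) → ℝ)
    (hB : B = fun u v => dotProduct u (F.mulVec v))
    (e₀ e₁ : Fin (n + 1) → ℝ)
    (he₀ : e₀ = fun t => if t = Fin.last n then (i : ℝ) ^ 2 - Real.sqrt 5 else 0)
    (he₁ : e₁ = fun t =>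
      if t = 0 then -2 * (i : ℝ)
      else if t = Fin.last n then (i : ℝ) ^ 2 + Real.sqrt 5 else 0) :
    B e₀ e₁ = (i : ℝ) ^ 4 - 5 ∧
    B e₀ e₀ = ((i : ℝ) ^ 2 - Real.sqrt 5) ^ 2 ∧
    B e₁ e₁ = ((i : ℝ) ^ 2 - Real.sqrt 5) ^ 2 ∧
    0 < ((i : ℝ) ^ 2 - Real.sqrt 5) ^ 2 ∧
    (B e₀ e₁) ^ 2 > B e₀ e₀ * B e₁ e₁ := by
  have h5 : Real.sqrt 5 * Real.sqrt 5 = 5 := Real.mul_self_sqrt (by norm_num)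
  have hs : 0 < Real.sqrt 5 := Real.sqrt_pos.mpr (by norm_num)
  have hne : (i : ℝ) ^ 2 - Real.sqrt 5 ≠ 0 := by
    intro h
    have h1 : (i : ℝ) ^ 2 = Real.sqrt 5 := by linarith
    have h2 : (i : ℝ) ^ 4 = 5 := by
      rw [← h5, ← h1]; ring
    have h3 : i ^ 4 = 5 := by exact_mod_cast h2
    have h4 : i < 2 := by
      by_contra! hc
      have := Nat.pow_le_pow_left hc 4
      omega
    interval_cases i
    omega
  have hpos : 0 < ((i : ℝ) ^ 2 - Real.sqrt 5) ^ 2 := by positivity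
  have hi' : (0 : ℝ) < i := by exact_mod_cast hi
  obtain ⟨m, rfl⟩ : ∃ m, n = m + 1 := ⟨n - 1, by omega⟩
  have key : ∀ u v : Fin (m + 1 + 1) → ℝ,
      (∀ t : Fin m, u t.castSucc.succ = 0) →
      B u v = -Real.sqrt 5 * u 0 * v 0 + u (Fin.last (m + 1)) * v (Fin.last (m + 1)) := by
    intro u v hu
    rw [hB, hF]
    simp only [dotProduct, Matrix.mulVec_diagonal]
    rw [Fin.sum_univ_succ, Fin.sum_univ_castSucc]
    simp only [hu, Fin.succ_last, Fin.succ_ne_zero, if_true, if_false, zero_mul,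
      Finset.sum_const_zero, Fin.last_eq_zero_iff]
    simp
    ring
  have hmid : ∀ t : Fin m, t.castSucc.succ ≠ Fin.last (m + 1) := by
    intro t h
    have := congrArg Fin.val h
    have := t.2
    simp at *
  have h0l : (0 : Fin (m + 1 + 1)) ≠ Fin.last (m + 1) := by
    intro h
    have := congrArg Fin.val h
    simp at this
  have hu0 : ∀ t : Fin m, e₀ t.castSucc.succ = 0 := by
    intro t
    simp only [he₀, if_neg (hmid t)]
  have hu1 : ∀ t : Fin m, e₁ t.castSucc.succ = 0 := by
    intro t
    simp only [he₁, if_neg (hmid t), if_neg (Fin.succ_ne_zero _)]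
  have a0 : e₀ 0 = 0 := by simp only [he₀, if_neg h0l]
  have al : e₀ (Fin.last (m + 1)) = (i : ℝ) ^ 2 - Real.sqrt 5 := by simp only [he₀, if_true]
  have b0 : e₁ 0 = -2 * (i : ℝ) := by simp only [he₁, if_true]
  have bl : e₁ (Fin.last (m + 1)) = (i : ℝ) ^ 2 + Real.sqrt 5 := by
    simp only [he₁, if_neg h0l.symm, if_true]
  have r1 : B e₀ e₁ = (i : ℝ) ^ 4 - 5 := by
    rw [key _ _ hu0, a0, al, b0, bl]
    linear_combination -h5
  have r2 : B e₀ e₀ = ((i : ℝ) ^ 2 - Real.sqrt 5) ^ 2 := by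
    rw [key _ _ hu0, a0, al]
    ring
  have r3 : B e₁ e₁ = ((i : ℝ) ^ 2 - Real.sqrt 5) ^ 2 := by
    rw [key _ _ hu1, b0, bl]
    ring
  refine ⟨r1, r2, r3, hpos, ?_⟩
  have r4 : (i : ℝ) ^ 4 - 5 = ((i : ℝ) ^ 2 - Real.sqrt 5) * ((i : ℝ) ^ 2 + Real.sqrt 5) := by
    linear_combination h5
  rw [r1, r2, r3, r4, mul_pow]
  have h6 : 0 < (i : ℝ) ^ 2 * Real.sqrt 5 := by positivity
  exact mul_lt_mul_of_pos_left (by nlinarith) hpos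
end
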